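/- Let T : M₀ → M₀ be any mapping on the set of all probability distributions on ℝ. Then T commutes with the utility transform T^u for every utility function u ∈ F_U if and only if there exists a distortion function d ∈ F̂_D (i.e., d ∈ F_D with additionally d(0+)=0 and d(1−)=1) such that T = T_d. -/

import Mathlib

open MeasureTheory Filter Topology Set

noncomputable section

/-- The set of cdfs of compactly supported probability distributions on ℝ:
increasing, right-continuous, equal to `0` for all sufficiently small `x` and
equal to `1` for all sufficiently large `x`. -/
def mSet : Set (ℝ → ℝ) :=
  {F | Monotone F ∧ (∀ x, ContinuousWithinAt F (Set.Ici x) x) ∧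
    (∃ a, ∀ x ≤ a, F x = 0) ∧ (∃ b, ∀ x, b ≤ x → F x = 1)}

/-- The set of cdfs of all probability distributions on ℝ: increasing,
right-continuous, with limit `0` at `-∞` and limit `1` at `+∞`. -/
def m0Set : Set (ℝ → ℝ) :=
  {F | Monotone F ∧ (∀ x, ContinuousWithinAt F (Set.Ici x) x) ∧
    Tendsto F atBot (𝓝 0) ∧ Tendsto F atTop (𝓝 1)}

/-- A utility function: increasing (non-strict) and continuous. -/
def IsUF (u : ℝ → ℝ) : Prop := Monotone u ∧ Continuous u

/-- An increasing and left-continuous function on ℝ. -/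
def IsLeftCtsIncr (u : ℝ → ℝ) : Prop :=
  Monotone u ∧ ∀ x, ContinuousWithinAt u (Set.Iic x) x

/-- A distortion function: an increasing function `d : [0,1] → [0,1]` with
`d 0 = 0` and `d 1 = 1` (values outside `[0,1]` are irrelevant). -/
def IsDF (d : ℝ → ℝ) : Prop :=
  MonotoneOn d (Set.Icc 0 1) ∧ d 0 = 0 ∧ d 1 = 1

/-- Right-continuity of a distortion function on `[0,1)`. -/
def DFRightCts (d : ℝ → ℝ) : Prop :=
  ∀ x ∈ Set.Ico (0:ℝ) 1, ContinuousWithinAt d (Set.Ioi x) x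

/-- A distortion function with moreover `d(0+) = 0` and `d(1-) = 1`. -/
def IsDFhat (d : ℝ → ℝ) : Prop :=
  IsDF d ∧ Tendsto d (𝓝[>] (0:ℝ)) (𝓝 0) ∧ Tendsto d (𝓝[<] (1:ℝ)) (𝓝 1)

/-- The probability distortion generated by `d`:  `T_d F x = (d ∘ F)(x+)`,
the right limit of `d ∘ F` at `x`. -/
noncomputable def distortT (d F : ℝ → ℝ) : ℝ → ℝ :=
  fun x => Function.rightLim (d ∘ F) x

/-- The utility transform `T^u`: it maps a cdf `F` to the cdf of the
pushforward under `u` of the probability measure with cdf `F`. -/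
noncomputable def utilityT (u F : ℝ → ℝ) : ℝ → ℝ := by
  classical
  exact
    if h : Monotone F ∧ ∀ x, ContinuousWithinAt F (Set.Ici x) x then
      fun x => ((StieltjesFunction.measure ⟨F, h.1, h.2⟩).map u (Set.Iic x)).toReal
    else F

/-- Left quantile `F_L^{-1}(p) = inf {x | F x ≥ p}`. -/
noncomputable def leftQ (F : ℝ → ℝ) (p : ℝ) : ℝ := sInf {x | p ≤ F x}

/-- Right quantile `F_R^{-1}(p) = inf {x | F x > p}`. -/
noncomputable def rightQ (F : ℝ → ℝ) (p : ℝ) : ℝ := sInf {x | p < F x}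

/-!
*Distortions commute.* For `F ∈ m0Set`, the value of `utilityT u F` at `x` is the mass that `F`
gives to `{u ≤ x}`, a set which is empty, all of `ℝ`, or a half-line `Iic a`. Hence, with
`G = utilityT u F` and `K = utilityT u (distortT d F)`, one gets `d (G y) ≤ K y`, and
`K x ≤ d (G y)` for `x < y`: continuity of `u` makes `{u ≤ y}` reach strictly beyond `{u ≤ x}`,
which absorbs the right limit in `distortT`. Right-continuity of `K` then identifies `K` with
`distortT d G`.

*Commuting maps are distortions.* Let `d p` be the mass that the image under `T` of the two-point
law with mass `p` at `0` and `1 - p` at `1` gives to `(-∞, 0]`. The indicator of `(x, ∞)` turns `F`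
into the two-point law with parameter `F x`, but it is not continuous. So first push the mass of `F`
on `(x, ∞)` one unit to the right, producing a law `F'` without mass in `(x, x + 1]`. Two continuous
utilities now do the work: the one collapsing `[x, x + 1]` to `x` recovers `F` from `F'`, and the
one rising from `0` to `1` over `[x, x + 1]` turns `F'` into the two-point law. Hence `T F` and
`d (F x)` are both read off from `T F'`, and comparing sublevel sets gives `T F t ≤ d (F x) ≤ T F x`
for `t < x`, so that `T F` is the right limit of `d ∘ F`. For the uniform law this sandwich shows
that `d` is a distortion function; for the logistic law, whose cdf avoids `0` and `1`, it gives the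
limits of `d` at the endpoints.
-/

section Limits

variable {α β γ : Type*} [TopologicalSpace β]

lemma tendsto_of_tendsto_comp [T2Space β] {f : α → β} {g : γ → α} {l : Filter α} {l' : Filter γ}
    [l'.NeBot] {b : β} (hf : ∃ c, Tendsto f l (𝓝 c)) (hg : Tendsto g l' l)
    (hfg : Tendsto (f ∘ g) l' (𝓝 b)) : Tendsto f l (𝓝 b) := by
  obtain ⟨c, hc⟩ := hf
  rwa [tendsto_nhds_unique (hc.comp hg) hfg] at hc

lemma rightLim_eq_of_le_of_le [LinearOrder α] [TopologicalSpace α] [OrderTopology α]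
    [LinearOrder β] [OrderTopology β] {f g : α → β} {x : α} [(𝓝[>] x).NeBot]
    (hg : ContinuousWithinAt g (Ici x) x) (hgf : ∀ y, x < y → g x ≤ f y)
    (hfg : ∀ y, x < y → f y ≤ g y) : Function.rightLim f x = g x := by
  refine rightLim_eq_of_tendsto (tendsto_of_tendsto_of_tendsto_of_le_of_le' tendsto_const_nhds
    (hg.mono_left (nhdsWithin_mono x Ioi_subset_Ici_self)) ?_ ?_)
  · filter_upwards [self_mem_nhdsWithin] with y hy using hgf y hy
  · filter_upwards [self_mem_nhdsWithin] with y hy using hfg y hy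

lemma exists_gt_apply_lt_of_continuousWithinAt [Preorder α] [TopologicalSpace α] [LinearOrder β]
    [OrderClosedTopology β] {f : α → β} {x : α} {b : β} [(𝓝[>] x).NeBot]
    (hf : ContinuousWithinAt f (Ioi x) x) (hb : f x < b) : ∃ y, x < y ∧ f y < b := by
  obtain ⟨y, hyb, hxy⟩ := ((hf.eventually_lt_const hb).and self_mem_nhdsWithin).exists
  exact ⟨y, hxy, hyb⟩

end Limits

lemma eq_empty_or_eq_univ_or_eq_Iic_of_isLowerSet {α : Type*} [ConditionallyCompleteLinearOrder α]
    [TopologicalSpace α] [OrderTopology α] {s : Set α} (hs : IsLowerSet s) (hc : IsClosed s) :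
    s = ∅ ∨ s = univ ∨ ∃ a, s = Iic a := by
  rcases s.eq_empty_or_nonempty with hempty | hne
  · exact .inl hempty
  by_cases hb : BddAbove s
  · exact .inr <| .inr ⟨sSup s, Subset.antisymm (fun _ hy => le_csSup hb hy)
      (hs.Iic_subset (hc.csSup_mem hne hb))⟩
  · refine .inr <| .inl <| eq_univ_of_forall fun y => ?_
    obtain ⟨z, hz, hyz⟩ := not_bddAbove_iff.1 hb y
    exact hs hyz.le hz

/-! ### Cdfs and utility transforms -/

section Cdf

open ProbabilityTheory

lemma cdf_mem_m0Set (μ : Measure ℝ) : ⇑(cdf μ) ∈ m0Set :=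
  ⟨monotone_cdf μ, (cdf μ).right_continuous, tendsto_cdf_atBot μ, tendsto_cdf_atTop μ⟩

lemma exists_cdf_eq {F : ℝ → ℝ} (hF : F ∈ m0Set) :
    ∃ μ : Measure ℝ, IsProbabilityMeasure μ ∧ ⇑(cdf μ) = F := by
  let f : StieltjesFunction ℝ := ⟨F, hF.1, hF.2.1⟩
  exact ⟨f.measure, f.isProbabilityMeasure hF.2.2.1 hF.2.2.2,
    congrArg _ (cdf_measure_stieltjesFunction f hF.2.2.1 hF.2.2.2)⟩

lemma mem_Icc_of_mem_m0Set {F : ℝ → ℝ} (hF : F ∈ m0Set) (x : ℝ) : F x ∈ Icc (0 : ℝ) 1 :=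
  ⟨hF.1.le_of_tendsto hF.2.2.1 x, hF.1.ge_of_tendsto hF.2.2.2 x⟩

lemma mem_m0Set_of_continuous {F : ℝ → ℝ} (hF : Monotone F) (hc : Continuous F)
    (h0 : Tendsto F atBot (𝓝 0)) (h1 : Tendsto F atTop (𝓝 1)) : F ∈ m0Set :=
  ⟨hF, fun _ => hc.continuousWithinAt, h0, h1⟩

lemma utilityT_cdf {u : ℝ → ℝ} (hu : Measurable u) (μ : Measure ℝ) [IsProbabilityMeasure μ] :
    utilityT u (cdf μ) = cdf (μ.map u) := by
  have := Measure.isProbabilityMeasure_map (μ := μ) hu.aemeasurable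
  ext x
  rw [utilityT, dif_pos ⟨monotone_cdf μ, (cdf μ).right_continuous⟩, cdf_eq_real, measureReal_def]
  exact congrArg (fun ν : Measure ℝ => (ν.map u (Iic x)).toReal) (measure_cdf μ)

lemma utilityT_cdf_apply {u : ℝ → ℝ} (hu : Measurable u) (μ : Measure ℝ) [IsProbabilityMeasure μ]
    (x : ℝ) : utilityT u (cdf μ) x = μ.real (u ⁻¹' Iic x) := by
  have := Measure.isProbabilityMeasure_map (μ := μ) hu.aemeasurable
  rw [utilityT_cdf hu, cdf_eq_real, map_measureReal_apply hu measurableSet_Iic]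

variable {F u v : ℝ → ℝ} {s t a : ℝ}

lemma utilityT_mem_m0Set (hu : Measurable u) (hF : F ∈ m0Set) : utilityT u F ∈ m0Set := by
  obtain ⟨μ, _, rfl⟩ := exists_cdf_eq hF
  rw [utilityT_cdf hu]
  exact cdf_mem_m0Set _

lemma utilityT_id (hF : F ∈ m0Set) : utilityT id F = F := by
  obtain ⟨μ, _, rfl⟩ := exists_cdf_eq hF
  rw [utilityT_cdf measurable_id, Measure.map_id]

lemma utilityT_comp (hu : Measurable u) (hv : Measurable v) (hF : F ∈ m0Set) :
    utilityT (u ∘ v) F = utilityT u (utilityT v F) := by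
  obtain ⟨μ, _, rfl⟩ := exists_cdf_eq hF
  have := Measure.isProbabilityMeasure_map (μ := μ) hv.aemeasurable
  rw [utilityT_cdf (hu.comp hv), utilityT_cdf hv, utilityT_cdf hu, Measure.map_map hu hv]

lemma utilityT_apply_le (hu : Measurable u) (hv : Measurable v) (hF : F ∈ m0Set)
    (h : u ⁻¹' Iic s ⊆ v ⁻¹' Iic t) : utilityT u F s ≤ utilityT v F t := by
  obtain ⟨μ, _, rfl⟩ := exists_cdf_eq hF
  rw [utilityT_cdf_apply hu, utilityT_cdf_apply hv]
  exact measureReal_mono h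

lemma utilityT_apply_of_preimage_eq_empty (hu : Measurable u) (hF : F ∈ m0Set)
    (h : u ⁻¹' Iic t = ∅) : utilityT u F t = 0 := by
  obtain ⟨μ, _, rfl⟩ := exists_cdf_eq hF
  rw [utilityT_cdf_apply hu, h, measureReal_empty]

lemma utilityT_apply_of_preimage_eq_univ (hu : Measurable u) (hF : F ∈ m0Set)
    (h : u ⁻¹' Iic t = univ) : utilityT u F t = 1 := by
  obtain ⟨μ, _, rfl⟩ := exists_cdf_eq hF
  rw [utilityT_cdf_apply hu, h, probReal_univ]

lemma utilityT_apply_of_preimage_eq_Iic (hu : Measurable u) (hF : F ∈ m0Set)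
    (h : u ⁻¹' Iic t = Iic a) : utilityT u F t = F a := by
  obtain ⟨μ, _, rfl⟩ := exists_cdf_eq hF
  rw [utilityT_cdf_apply hu, h, cdf_eq_real]

lemma le_utilityT_apply (hu : Monotone u) (hF : F ∈ m0Set) (h : u a ≤ t) :
    F a ≤ utilityT u F t :=
  calc F a = utilityT id F a := by rw [utilityT_id hF]
    _ ≤ utilityT u F t :=
      utilityT_apply_le measurable_id hu.measurable hF fun _ hz => (hu hz).trans h

end Cdf

lemma IsUF.measurable {u : ℝ → ℝ} (hu : IsUF u) : Measurable u := hu.2.measurable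

lemma IsUF.preimage_Iic {u : ℝ → ℝ} (hu : IsUF u) (x : ℝ) :
    u ⁻¹' Iic x = ∅ ∨ u ⁻¹' Iic x = univ ∨ ∃ a, u ⁻¹' Iic x = Iic a :=
  eq_empty_or_eq_univ_or_eq_Iic_of_isLowerSet ((isLowerSet_Iic x).preimage hu.1)
    (isClosed_Iic.preimage hu.2)

/-! ### Distortions commute with utility transforms -/

section Distortion

variable {d F u : ℝ → ℝ} {x y : ℝ}

lemma IsDF.mapsTo (hd : IsDF d) : MapsTo d (Icc 0 1) (Icc 0 1) := by
  simpa only [hd.2.1, hd.2.2] using hd.1.mapsTo_Icc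

lemma IsDF.monotone_comp (hd : IsDF d) (hF : F ∈ m0Set) : Monotone (d ∘ F) := fun a b hab =>
  hd.1 (mem_Icc_of_mem_m0Set hF a) (mem_Icc_of_mem_m0Set hF b) (hF.1 hab)

lemma IsDFhat.tendsto_comp_atBot (hd : IsDFhat d) (hF : F ∈ m0Set) :
    Tendsto (d ∘ F) atBot (𝓝 0) := by
  have hd0 : Tendsto d (𝓝[≥] 0) (𝓝 0) := by
    rw [← Ioi_insert, nhdsWithin_insert]
    exact (tendsto_pure_left.2 fun s hs => hd.1.2.1.symm ▸ mem_of_mem_nhds hs).sup hd.2.1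
  exact hd0.comp (tendsto_nhdsWithin_iff.2
    ⟨hF.2.2.1, Eventually.of_forall fun x => (mem_Icc_of_mem_m0Set hF x).1⟩)

lemma IsDFhat.tendsto_comp_atTop (hd : IsDFhat d) (hF : F ∈ m0Set) :
    Tendsto (d ∘ F) atTop (𝓝 1) := by
  have hd1 : Tendsto d (𝓝[≤] 1) (𝓝 1) := by
    rw [← Iio_insert, nhdsWithin_insert]
    exact (tendsto_pure_left.2 fun s hs => hd.1.2.2.symm ▸ mem_of_mem_nhds hs).sup hd.2.2
  exact hd1.comp (tendsto_nhdsWithin_iff.2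
    ⟨hF.2.2.2, Eventually.of_forall fun x => (mem_Icc_of_mem_m0Set hF x).2⟩)

lemma IsDFhat.distortT_mem_m0Set (hd : IsDFhat d) (hF : F ∈ m0Set) : distortT d F ∈ m0Set :=
  have hmono := hd.1.monotone_comp hF
  ⟨hmono.rightLim, fun x => continuousWithinAt_rightLim_Ici (hmono.tendsto_rightLim x),
    tendsto_rightLim_atBot_of_tendsto (hd.tendsto_comp_atBot hF),
    tendsto_rightLim_atTop_of_tendsto (hd.tendsto_comp_atTop hF)⟩

lemma IsDFhat.apply_utilityT_le (hd : IsDFhat d) (hu : IsUF u) (hF : F ∈ m0Set) (x : ℝ) :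
    d (utilityT u F x) ≤ utilityT u (distortT d F) x := by
  have hdF := hd.distortT_mem_m0Set hF
  rcases hu.preimage_Iic x with h | h | ⟨a, h⟩
  · rw [utilityT_apply_of_preimage_eq_empty hu.measurable hF h,
      utilityT_apply_of_preimage_eq_empty hu.measurable hdF h, hd.1.2.1]
  · rw [utilityT_apply_of_preimage_eq_univ hu.measurable hF h,
      utilityT_apply_of_preimage_eq_univ hu.measurable hdF h, hd.1.2.2]
  · rw [utilityT_apply_of_preimage_eq_Iic hu.measurable hF h,
      utilityT_apply_of_preimage_eq_Iic hu.measurable hdF h]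
    exact (hd.1.monotone_comp hF).le_rightLim le_rfl

lemma IsDFhat.utilityT_distortT_le (hd : IsDFhat d) (hu : IsUF u) (hF : F ∈ m0Set) (hxy : x < y) :
    utilityT u (distortT d F) x ≤ d (utilityT u F y) := by
  have hdF := hd.distortT_mem_m0Set hF
  have hG := utilityT_mem_m0Set hu.measurable hF
  rcases hu.preimage_Iic x with h | h | ⟨a, h⟩
  · rw [utilityT_apply_of_preimage_eq_empty hu.measurable hdF h]
    exact (hd.1.mapsTo (mem_Icc_of_mem_m0Set hG y)).1
  · have h' : u ⁻¹' Iic y = univ :=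
      univ_subset_iff.1 (h.symm.subset.trans (preimage_mono (Iic_subset_Iic.2 hxy.le)))
    rw [utilityT_apply_of_preimage_eq_univ hu.measurable hdF h,
      utilityT_apply_of_preimage_eq_univ hu.measurable hF h', hd.1.2.2]
  · have hua : u a ≤ x := h.symm.subset self_mem_Iic
    obtain ⟨b, hab, hub⟩ := exists_gt_apply_lt_of_continuousWithinAt
      hu.2.continuousWithinAt (hua.trans_lt hxy)
    calc utilityT u (distortT d F) x = distortT d F a :=
          utilityT_apply_of_preimage_eq_Iic hu.measurable hdF h
      _ ≤ d (F b) := (hd.1.monotone_comp hF).rightLim_le hab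
      _ ≤ d (utilityT u F y) := hd.1.1 (mem_Icc_of_mem_m0Set hF b) (mem_Icc_of_mem_m0Set hG y)
          (le_utilityT_apply hu.1 hF hub.le)

theorem IsDFhat.distortT_utilityT (hd : IsDFhat d) (hu : IsUF u) (hF : F ∈ m0Set) :
    distortT d (utilityT u F) = utilityT u (distortT d F) := by
  ext x
  exact rightLim_eq_of_le_of_le
    ((utilityT_mem_m0Set hu.measurable (hd.distortT_mem_m0Set hF)).2.1 x)
    (fun _ hxy => hd.utilityT_distortT_le hu hF hxy) (fun y _ => hd.apply_utilityT_le hu hF y)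

lemma IsDF.isDFhat_of_tendsto_comp (hd : IsDF d) (hF : ∀ x, F x ∈ Ioo 0 1)
    (hF0 : Tendsto F atBot (𝓝 0)) (hF1 : Tendsto F atTop (𝓝 1))
    (hdF0 : Tendsto (d ∘ F) atBot (𝓝 0)) (hdF1 : Tendsto (d ∘ F) atTop (𝓝 1)) : IsDFhat d := by
  have hmono : MonotoneOn d (Ioo 0 1) := hd.1.mono Ioo_subset_Icc_self
  have hne : (Ioo (0 : ℝ) 1).Nonempty := nonempty_Ioo.2 one_pos
  have himage : d '' Ioo 0 1 ⊆ Icc 0 1 := (hd.mapsTo.mono_left Ioo_subset_Icc_self).image_subset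
  refine ⟨hd, tendsto_of_tendsto_comp ?_ ?_ hdF0, tendsto_of_tendsto_comp ?_ ?_ hdF1⟩
  · exact ⟨_, hmono.tendsto_nhdsWithin_Ioo_right hne (bddBelow_Icc.mono himage)⟩
  · exact tendsto_nhdsWithin_iff.2 ⟨hF0, Eventually.of_forall fun x => (hF x).1⟩
  · exact ⟨_, hmono.tendsto_nhdsWithin_Ioo_left hne (bddAbove_Icc.mono himage)⟩
  · exact tendsto_nhdsWithin_iff.2 ⟨hF1, Eventually.of_forall fun x => (hF x).2⟩

end Distortion

/-! ### Opening and closing a gap -/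

/-- The utility function that rises linearly from `0` to `1` over `[x, x + 1]`. It is also the cdf
of the uniform law on `[x, x + 1]`. -/
def unitRamp (x t : ℝ) : ℝ := projIcc (0 : ℝ) 1 zero_le_one (t - x)

/-- The map that opens a gap of length one immediately to the right of `x`. -/
def openGap (x t : ℝ) : ℝ := if t ≤ x then t else t + 1

/-- The utility function that collapses `[x, x + 1]` to `x`, a left inverse of `openGap x`. -/
def closeGap (x t : ℝ) : ℝ := max (min t x) (t - 1)

/-- The cdf of the two-point law with mass `p` at `0` and mass `1 - p` at `1`. -/
def twoPointCdf (p t : ℝ) : ℝ := if t < 0 then 0 else if t < 1 then p else 1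

section Gap

variable {F : ℝ → ℝ} {p x t : ℝ}

lemma isUF_unitRamp (x : ℝ) : IsUF (unitRamp x) :=
  ⟨fun _ _ hst => monotone_projIcc _ (sub_le_sub_right hst x),
    continuous_subtype_val.comp (continuous_projIcc.comp (continuous_sub_right x))⟩

lemma unitRamp_of_le (h : t ≤ x) : unitRamp x t = 0 := by
  rw [unitRamp, projIcc_of_le_left _ (sub_nonpos.2 h)]

lemma unitRamp_of_add_one_le (h : x + 1 ≤ t) : unitRamp x t = 1 := by
  rw [unitRamp, projIcc_of_right_le _ (le_sub_iff_add_le'.2 h)]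

lemma unitRamp_nonpos_iff : unitRamp x t ≤ 0 ↔ t ≤ x := by
  simp [unitRamp, coe_projIcc]

lemma unitRamp_zero_of_mem (hp : p ∈ Icc 0 1) : unitRamp 0 p = p := by
  rw [unitRamp, sub_zero, projIcc_of_mem _ hp]

lemma unitRamp_mem_m0Set (x : ℝ) : unitRamp x ∈ m0Set := by
  refine mem_m0Set_of_continuous (isUF_unitRamp x).1 (isUF_unitRamp x).2
    (tendsto_const_nhds.congr' ?_) (tendsto_const_nhds.congr' ?_)
  · filter_upwards [eventually_le_atBot x] with t ht using (unitRamp_of_le ht).symm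
  · filter_upwards [eventually_ge_atTop (x + 1)] with t ht using (unitRamp_of_add_one_le ht).symm

lemma measurable_openGap (x : ℝ) : Measurable (openGap x) :=
  Measurable.ite measurableSet_Iic measurable_id (measurable_id.add_const 1)

lemma isUF_closeGap (x : ℝ) : IsUF (closeGap x) :=
  ⟨fun _ _ hst => max_le_max (min_le_min_right x hst) (sub_le_sub_right hst 1),
    by unfold closeGap; fun_prop⟩

lemma closeGap_comp_openGap (x : ℝ) : closeGap x ∘ openGap x = id := by
  ext t
  simp only [Function.comp_apply, closeGap, openGap, id]
  split_ifs <;> grind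

lemma unitRamp_comp_openGap (x : ℝ) : unitRamp x ∘ openGap x = (Ioi x).indicator 1 := by
  ext t
  rcases le_or_gt t x with h | h
  · rw [Function.comp_apply, openGap, if_pos h, unitRamp_of_le h,
      indicator_of_notMem (notMem_Ioi.2 h)]
  · rw [Function.comp_apply, openGap, if_neg h.not_ge,
      unitRamp_of_add_one_le (by gcongr), indicator_of_mem (mem_Ioi.2 h), Pi.one_apply]

lemma closeGap_preimage_subset_unitRamp_preimage (h : t < x) :
    closeGap x ⁻¹' Iic t ⊆ unitRamp x ⁻¹' Iic 0 := fun s hs => by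
  have hmin : min s x ≤ t := (le_max_left _ _).trans hs
  have hst : s ≤ t := (min_le_iff.1 hmin).resolve_right h.not_ge
  exact unitRamp_nonpos_iff.2 (hst.trans h.le)

lemma unitRamp_preimage_subset_closeGap_preimage (x : ℝ) :
    unitRamp x ⁻¹' Iic 0 ⊆ closeGap x ⁻¹' Iic x := fun s hs => by
  have hsx : s ≤ x := unitRamp_nonpos_iff.1 hs
  exact max_le (min_le_right s x) (by linarith)

lemma utilityT_indicator_Ioi (hF : F ∈ m0Set) (x : ℝ) :
    utilityT ((Ioi x).indicator 1) F = twoPointCdf (F x) := by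
  have hm : Measurable ((Ioi x).indicator (1 : ℝ → ℝ)) :=
    measurable_one.indicator measurableSet_Ioi
  ext t
  rw [twoPointCdf]
  split_ifs with h0 h1
  · refine utilityT_apply_of_preimage_eq_empty hm hF (eq_empty_of_forall_notMem fun s hs => ?_)
    exact (hs.trans_lt h0).not_ge (indicator_nonneg (fun _ _ => zero_le_one) s)
  · refine utilityT_apply_of_preimage_eq_Iic hm hF (ext fun s => ?_)
    simp only [mem_preimage, mem_Iic, indicator_apply, mem_Ioi, Pi.one_apply]
    grind
  · refine utilityT_apply_of_preimage_eq_univ hm hF (eq_univ_of_forall fun s => ?_)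
    exact (indicator_le_self' (fun _ _ => zero_le_one) s).trans (not_lt.1 h1)

lemma twoPointCdf_mem_m0Set (hp : p ∈ Icc 0 1) : twoPointCdf p ∈ m0Set := by
  have h := utilityT_indicator_Ioi (unitRamp_mem_m0Set 0) p
  rw [unitRamp_zero_of_mem hp] at h
  exact h ▸ utilityT_mem_m0Set (measurable_one.indicator measurableSet_Ioi) (unitRamp_mem_m0Set 0)

end Gap

/-! ### Commuting maps are distortions -/

/-- The property that `T` commutes on `m0Set` with the utility transforms of all utility
functions. -/
def CommutesWithUtility (T : (ℝ → ℝ) → ℝ → ℝ) : Prop :=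
  ∀ u : ℝ → ℝ, IsUF u → ∀ F ∈ m0Set, T (utilityT u F) = utilityT u (T F)

/-- The distortion function of a map `T` that commutes with utility transforms: `p ∈ [0, 1]` is sent
to the mass that the image under `T` of the two-point law with parameter `p` gives to `(-∞, 0]`. -/
def distortionOf (T : (ℝ → ℝ) → ℝ → ℝ) (p : ℝ) : ℝ := T (twoPointCdf p) 0

namespace CommutesWithUtility

variable {T : (ℝ → ℝ) → ℝ → ℝ} {F u v w : ℝ → ℝ} {s t x : ℝ}

lemma apply_utilityT_comp (hc : CommutesWithUtility T) (hu : IsUF u) (hw : Measurable w)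
    (hF : F ∈ m0Set) : T (utilityT (u ∘ w) F) = utilityT u (T (utilityT w F)) := by
  rw [utilityT_comp hu.measurable hw hF, hc u hu _ (utilityT_mem_m0Set hw hF)]

lemma apply_utilityT_comp_le (hc : CommutesWithUtility T) (hT : MapsTo T m0Set m0Set)
    (hu : IsUF u) (hv : IsUF v) (hw : Measurable w) (hF : F ∈ m0Set)
    (h : u ⁻¹' Iic s ⊆ v ⁻¹' Iic t) :
    T (utilityT (u ∘ w) F) s ≤ T (utilityT (v ∘ w) F) t := by
  rw [hc.apply_utilityT_comp hu hw hF, hc.apply_utilityT_comp hv hw hF]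
  exact utilityT_apply_le hu.measurable hv.measurable (hT (utilityT_mem_m0Set hw hF)) h

lemma distortionOf_le_apply (hc : CommutesWithUtility T) (hT : MapsTo T m0Set m0Set)
    (hF : F ∈ m0Set) (x : ℝ) : distortionOf T (F x) ≤ T F x := by
  have h := hc.apply_utilityT_comp_le hT (isUF_unitRamp x) (isUF_closeGap x) (measurable_openGap x)
    hF (unitRamp_preimage_subset_closeGap_preimage x)
  rwa [unitRamp_comp_openGap, utilityT_indicator_Ioi hF, closeGap_comp_openGap, utilityT_id hF] at h

lemma apply_le_distortionOf (hc : CommutesWithUtility T) (hT : MapsTo T m0Set m0Set)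
    (hF : F ∈ m0Set) (htx : t < x) : T F t ≤ distortionOf T (F x) := by
  have h := hc.apply_utilityT_comp_le hT (isUF_closeGap x) (isUF_unitRamp x) (measurable_openGap x)
    hF (closeGap_preimage_subset_unitRamp_preimage htx)
  rwa [unitRamp_comp_openGap, utilityT_indicator_Ioi hF, closeGap_comp_openGap, utilityT_id hF] at h

theorem eq_distortT (hc : CommutesWithUtility T) (hT : MapsTo T m0Set m0Set) (hF : F ∈ m0Set) :
    T F = distortT (distortionOf T) F := by
  ext x
  exact (rightLim_eq_of_le_of_le ((hT hF).2.1 x) (fun _ hxy => hc.apply_le_distortionOf hT hF hxy)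
    (fun y _ => hc.distortionOf_le_apply hT hF y)).symm

lemma monotoneOn_distortionOf (hc : CommutesWithUtility T) (hT : MapsTo T m0Set m0Set) :
    MonotoneOn (distortionOf T) (Icc 0 1) := by
  intro p hp q hq hpq
  rcases hpq.eq_or_lt with rfl | hlt
  · exact le_rfl
  have hU := unitRamp_mem_m0Set 0
  calc distortionOf T p = distortionOf T (unitRamp 0 p) := by rw [unitRamp_zero_of_mem hp]
    _ ≤ T (unitRamp 0) p := hc.distortionOf_le_apply hT hU p
    _ ≤ distortionOf T (unitRamp 0 q) := hc.apply_le_distortionOf hT hU hlt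
    _ = distortionOf T q := by rw [unitRamp_zero_of_mem hq]

lemma isDF_distortionOf (hc : CommutesWithUtility T) (hT : MapsTo T m0Set m0Set) :
    IsDF (distortionOf T) := by
  have hU := unitRamp_mem_m0Set 0
  have hmem : ∀ p ∈ Icc (0 : ℝ) 1, distortionOf T p ∈ Icc 0 1 := fun p hp =>
    mem_Icc_of_mem_m0Set (hT (twoPointCdf_mem_m0Set hp)) 0
  refine ⟨hc.monotoneOn_distortionOf hT, le_antisymm ?_ (hmem 0 unitInterval.zero_mem).1,
    le_antisymm (hmem 1 unitInterval.one_mem).2 ?_⟩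
  · refine ge_of_tendsto (hT hU).2.2.1 ?_
    filter_upwards [eventually_le_atBot 0] with x hx
    simpa only [unitRamp_of_le hx] using hc.distortionOf_le_apply hT hU x
  · refine le_of_tendsto (hT hU).2.2.2 ?_
    filter_upwards [eventually_ge_atTop 0] with x hx
    simpa only [unitRamp_of_add_one_le (add_le_add_left hx 1)] using
      hc.apply_le_distortionOf hT hU (lt_add_one x)

theorem isDFhat_distortionOf (hc : CommutesWithUtility T) (hT : MapsTo T m0Set m0Set) :
    IsDFhat (distortionOf T) := by
  have hS : Real.sigmoid ∈ m0Set := mem_m0Set_of_continuous Real.sigmoid_monotone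
    continuous_sigmoid Real.tendsto_sigmoid_atBot Real.tendsto_sigmoid_atTop
  have hd := hc.isDF_distortionOf hT
  have hmem : ∀ x, distortionOf T (Real.sigmoid x) ∈ Icc 0 1 := fun x =>
    hd.mapsTo (mem_Icc_of_mem_m0Set hS x)
  refine hd.isDFhat_of_tendsto_comp (fun x => ⟨Real.sigmoid_pos x, Real.sigmoid_lt_one x⟩)
    Real.tendsto_sigmoid_atBot Real.tendsto_sigmoid_atTop ?_ ?_
  · exact squeeze_zero (fun x => (hmem x).1) (hc.distortionOf_le_apply hT hS) (hT hS).2.2.1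
  · have hshift : Tendsto (fun x => T Real.sigmoid (x - 1)) atTop (𝓝 1) :=
      (hT hS).2.2.2.comp (tendsto_atTop_add_const_right atTop (-1) tendsto_id)
    exact tendsto_of_tendsto_of_tendsto_of_le_of_le hshift tendsto_const_nhds
      (fun x => hc.apply_le_distortionOf hT hS (sub_one_lt x)) (fun x => (hmem x).2)

end CommutesWithUtility

/-- A map `T : M₀ → M₀` commutes with the utility transform `T^u` for every
utility function `u` if and only if `T = T_d` for some distortion function `d`
with additionally `d(0+) = 0` and `d(1-) = 1`. -/
theorem stmt8 (T : (ℝ → ℝ) → ℝ → ℝ) (hT : ∀ F ∈ m0Set, T F ∈ m0Set) :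
    (∀ u : ℝ → ℝ, IsUF u → ∀ F ∈ m0Set, T (utilityT u F) = utilityT u (T F)) ↔
      ∃ d : ℝ → ℝ, IsDFhat d ∧ ∀ F ∈ m0Set, T F = distortT d F := by
  constructor
  · intro hc
    exact ⟨distortionOf T, CommutesWithUtility.isDFhat_distortionOf hc hT,
      fun F hF => CommutesWithUtility.eq_distortT hc hT hF⟩
  · rintro ⟨d, hd, hTd⟩ u hu F hF
    rw [hTd _ (utilityT_mem_m0Set hu.measurable hF), hTd F hF, hd.distortT_utilityT hu hF]
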